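/- Let k, l, α ∈ ℂ and j ∈ ℂ, and assume that ((k+2)h + α + j − l − 1)·((k+2)h + α + j + l) ≠ 0 for every integer h ≥ 0. Then the linear operator A_{α,j} : ℂ[[ξ]] → ℂ[[ξ]], A_{α,j} g = D(D g) + (2α+2j−1)·D g + (α+j−l−1)(α+j+l)·g + ξ·g, where D g = (k+2)·ξ·g′, is a bijection: for every b ∈ ℂ[[ξ]] there is a unique g ∈ ℂ[[ξ]] with A_{α,j} g = b. -/

import Mathlib

open PowerSeries

/-!
Put `D = (k + 2) ξ d/dξ`. Since `(α + j - l - 1) + (α + j + l) = 2α + 2j - 1`, the operator factors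
as `A = (D + (α + j - l - 1)) (D + (α + j + l)) + ξ`. Its first summand is a polynomial in `D`,
hence diagonal in the monomials, with the values of the indicial polynomial on the diagonal. When
these are invertible, comparing coefficients in `A g = b` determines the coefficients of `g` one
after the other.
-/

section Recursion

variable {R : Type*} [Ring R]

/-- The Frobenius recursion: the solution of `u 0 * g 0 = b 0` and
`u (n + 1) * g (n + 1) + g n = b (n + 1)`, with invertible leading coefficients `u n`. -/
def frobeniusCoeff (u : ℕ → Rˣ) (b : ℕ → R) : ℕ → R
  | 0 => ↑(u 0)⁻¹ * b 0
  | n + 1 => ↑(u (n + 1))⁻¹ * (b (n + 1) - frobeniusCoeff u b n)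

variable {p : ℕ → R} {L : R⟦X⟧ → R⟦X⟧}

theorem injective_add_X_mul_of_coeff_eq (hp : ∀ n, IsUnit (p n))
    (hL : ∀ g n, coeff n (L g) = p n * coeff n g) :
    Function.Injective fun g ↦ L g + X * g := by
  intro f g hfg
  ext n
  have coeff_eq : coeff n (L f + X * f) = coeff n (L g + X * g) := congrArg (coeff n) hfg
  induction n with
  | zero =>
    simp only [map_add, hL, coeff_zero_X_mul, add_zero] at coeff_eq
    exact (hp 0).mul_left_cancel coeff_eq
  | succ n ih =>
    have lower_eq : coeff n f = coeff n g := ih (congrArg (coeff n) hfg)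
    simp only [map_add, hL, coeff_succ_X_mul, lower_eq, add_left_inj] at coeff_eq
    exact (hp (n + 1)).mul_left_cancel coeff_eq

theorem surjective_add_X_mul_of_coeff_eq (hp : ∀ n, IsUnit (p n))
    (hL : ∀ g n, coeff n (L g) = p n * coeff n g) :
    Function.Surjective fun g ↦ L g + X * g := by
  intro b
  choose u hu using hp
  refine ⟨PowerSeries.mk (frobeniusCoeff u (coeff · b)), ?_⟩
  ext n
  cases n with
  | zero =>
    rw [map_add, hL, coeff_mk, frobeniusCoeff, coeff_zero_X_mul, ← hu, Units.mul_inv_cancel_left,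
      add_zero]
  | succ n =>
    rw [map_add, hL, coeff_mk, frobeniusCoeff, coeff_succ_X_mul, coeff_mk, ← hu,
      Units.mul_inv_cancel_left, sub_add_cancel]

theorem bijective_add_X_mul_of_coeff_eq (hp : ∀ n, IsUnit (p n))
    (hL : ∀ g n, coeff n (L g) = p n * coeff n g) :
    Function.Bijective fun g ↦ L g + X * g :=
  ⟨injective_add_X_mul_of_coeff_eq hp hL, surjective_add_X_mul_of_coeff_eq hp hL⟩

end Recursion

section EulerOperator

variable {R : Type*} [CommSemiring R]

/-- The Euler operator `g ↦ c ξ g′` on formal power series in `ξ`, which is `D_ξ` for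
`c = k + 2`. -/
noncomputable def eulerOperator (c : R) : Module.End R R⟦X⟧ :=
  c • (LinearMap.mulLeft R X ∘ₗ (derivative R).toLinearMap)

theorem eulerOperator_apply (c : R) (g : R⟦X⟧) :
    eulerOperator c g = C c * (X * derivative R g) := by
  simp [eulerOperator, smul_eq_C_mul]

theorem coeff_eulerOperator (c : R) (g : R⟦X⟧) (n : ℕ) :
    coeff n (eulerOperator c g) = c * n * coeff n g := by
  rw [eulerOperator_apply, coeff_C_mul]
  cases n with
  | zero => simp
  | succ n =>
    rw [coeff_succ_X_mul, coeff_derivative]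
    push_cast
    ring

theorem coeff_aeval_eulerOperator (c : R) (P : Polynomial R) (g : R⟦X⟧) (n : ℕ) :
    coeff n (Polynomial.aeval (eulerOperator c) P g) = P.eval (c * n) * coeff n g := by
  induction P using Polynomial.induction_on' with
  | add P Q hP hQ => simp [hP, hQ, add_mul]
  | monomial m a =>
    have coeff_pow : coeff n ((eulerOperator c ^ m) g) = (c * n) ^ m * coeff n g := by
      induction m with
      | zero => simp
      | succ m ih =>
        rw [pow_succ', Module.End.mul_apply, coeff_eulerOperator, ih, pow_succ',
          mul_assoc (c * (n : R))]
    simp [Polynomial.aeval_monomial, coeff_pow, mul_assoc]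

end EulerOperator

theorem aeval_X_add_C_mul_X_add_C_apply {R M : Type*} [CommSemiring R] [AddCommMonoid M]
    [Module R M] (f : Module.End R M) (s t : R) (x : M) :
    Polynomial.aeval f ((Polynomial.X + Polynomial.C s) * (Polynomial.X + Polynomial.C t)) x =
      f (f x) + (s + t) • f x + (s * t) • x := by
  simp only [map_mul, map_add, map_smul, Polynomial.aeval_X, Polynomial.aeval_C,
    Module.End.mul_apply, LinearMap.add_apply, Module.algebraMap_end_apply]
  module

theorem bijective_aeval_eulerOperator_add_X_mul {R : Type*} [CommRing R] {c : R} {P : Polynomial R}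
    (hP : ∀ n : ℕ, IsUnit (P.eval (c * n))) :
    Function.Bijective fun g : R⟦X⟧ ↦ Polynomial.aeval (eulerOperator c) P g + X * g :=
  bijective_add_X_mul_of_coeff_eq hP (coeff_aeval_eulerOperator c P)

theorem frobenius_operator_bijective_general {R : Type*} [CommRing R] (k l α j : R)
    (hR : ∀ h : ℕ, IsUnit (((k + 2) * (h : R) + α + j - l - 1)
      * ((k + 2) * (h : R) + α + j + l)))
    (D : R⟦X⟧ → R⟦X⟧) (hD : ∀ g, D g = C (k + 2) * (X * derivative R g))
    (A : R⟦X⟧ → R⟦X⟧)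
    (hA : ∀ g, A g = D (D g) + C (2 * α + 2 * j - 1) * D g
      + C ((α + j - l - 1) * (α + j + l)) * g + X * g) :
    ∀ b : R⟦X⟧, ∃! g : R⟦X⟧, A g = b := by
  obtain rfl : D = eulerOperator (k + 2) :=
    funext fun g ↦ (hD g).trans (eulerOperator_apply _ g).symm
  let indicial : Polynomial R :=
    (Polynomial.X + Polynomial.C (α + j - l - 1)) * (Polynomial.X + Polynomial.C (α + j + l))
  have indicial_isUnit (h : ℕ) : IsUnit (indicial.eval ((k + 2) * h)) := by
    convert hR h using 1
    simp only [indicial, Polynomial.eval_mul, Polynomial.eval_add, Polynomial.eval_X,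
      Polynomial.eval_C]
    ring
  have A_eq : A = fun g ↦ Polynomial.aeval (eulerOperator (k + 2)) indicial g + X * g := by
    funext g
    have sum_eq : α + j - l - 1 + (α + j + l) = 2 * α + 2 * j - 1 := by ring
    rw [hA, aeval_X_add_C_mul_X_add_C_apply, sum_eq, smul_eq_C_mul, smul_eq_C_mul]
  rw [A_eq]
  exact (bijective_aeval_eulerOperator_add_X_mul indicial_isUnit).existsUnique

/-- If the indicial polynomial `R_j(h;α) = ((k+2)h+α+j−l−1)((k+2)h+α+j+l)` never vanishes
for `h ∈ ℤ_{≥0}`, then the operator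
`A_{α,j} g = D(Dg) + (2α+2j−1)Dg + (α+j−l−1)(α+j+l)g + ξg`, with `D g = (k+2)·ξ·g′`,
is a bijection on formal power series: every `b` has a unique preimage. -/
theorem frobenius_operator_bijective (k l α j : ℂ)
    (hR : ∀ h : ℕ, ((k + 2) * (h : ℂ) + α + j - l - 1)
      * ((k + 2) * (h : ℂ) + α + j + l) ≠ 0)
    (D : PowerSeries ℂ → PowerSeries ℂ)
    (hD : ∀ g, D g = C (k + 2) * (X * derivative ℂ g))
    (A : PowerSeries ℂ → PowerSeries ℂ)
    (hA : ∀ g, A g = D (D g) + C (2 * α + 2 * j - 1) * D g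
      + C ((α + j - l - 1) * (α + j + l)) * g + X * g) :
    ∀ b : PowerSeries ℂ, ∃! g : PowerSeries ℂ, A g = b :=
  frobenius_operator_bijective_general k l α j (fun h ↦ (hR h).isUnit) D hD A hA
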